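/- Let n ≥ 1, 1 ≤ p < ∞ and 0 ≤ λ < n, and let f belong to the homogeneous Morrey space L^{p,λ}(ℝⁿ). Then f satisfies the vanishing property (V*) if and only if for every fixed R₀ > 0 one has sup_{x ∈ ℝⁿ, 0 < r ≤ R₀} ∫_{B(x,r)} |f(y)|^p · χ_{{|y| ≥ N}}(y) dy → 0 as N → ∞. -/

import Mathlib

/-!
A ball of radius `r ≤ R₀` is covered by `K` unit balls, where `K` depends only on `R₀`: translate a
finite unit-ball cover of the compact ball `closedBall 0 R₀`. Hence the supremum over `0 < r ≤ R₀`
of the truncated integrals is at most `K * morreyA n p N f` (`integral_ball_le_mul_morreyA`), which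
gives the forward direction. Conversely, `morreyA n p N f` is at most the supremum for `R₀ = 1`.
The Morrey bound at radius `1` makes the real suprema involved genuine (bounded above).
-/

open MeasureTheory Metric Filter Topology

/-- The Morrey quantity `𝔐_{p,λ}(f;x,r) = r^{-λ} ∫_{B(x,r)} |f(y)|^p dy`. -/
noncomputable def morreyM (n : ℕ) (p lam : ℝ) (f : EuclideanSpace ℝ (Fin n) → ℝ)
    (x : EuclideanSpace ℝ (Fin n)) (r : ℝ) : ℝ :=
  r ^ (-lam) * ∫ y in ball x r, |f y| ^ p

/-- Local `p`-integrability: `|f|^p` is integrable on every ball. -/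
def LocIntPow (n : ℕ) (p : ℝ) (f : EuclideanSpace ℝ (Fin n) → ℝ) : Prop :=
  ∀ (x : EuclideanSpace ℝ (Fin n)) (r : ℝ), 0 < r →
    IntegrableOn (fun y => |f y| ^ p) (ball x r) volume

/-- Membership in the homogeneous Morrey space `L^{p,λ}(ℝⁿ)`. -/
def MemMorrey (n : ℕ) (p lam : ℝ) (f : EuclideanSpace ℝ (Fin n) → ℝ) : Prop :=
  LocIntPow n p f ∧ ∃ C : ℝ, ∀ x r, 0 < r → morreyM n p lam f x r ≤ C

/-- The homogeneous Morrey norm `‖f‖_{p,λ}`. -/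
noncomputable def morreyNorm (n : ℕ) (p lam : ℝ) (f : EuclideanSpace ℝ (Fin n) → ℝ) : ℝ :=
  sSup {c : ℝ | ∃ x r, 0 < r ∧ c = morreyM n p lam f x r} ^ (1 / p)

/-- The vanishing property `(V⁰)` at the origin. -/
def VZero (n : ℕ) (p lam : ℝ) (f : EuclideanSpace ℝ (Fin n) → ℝ) : Prop :=
  Tendsto (fun r : ℝ => ⨆ x, morreyM n p lam f x r) (nhdsWithin 0 (Set.Ioi 0)) (nhds 0)

/-- The vanishing property `(V^∞)` at infinity. -/
def VInfty (n : ℕ) (p lam : ℝ) (f : EuclideanSpace ℝ (Fin n) → ℝ) : Prop :=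
  Tendsto (fun r : ℝ => ⨆ x, morreyM n p lam f x r) atTop (nhds 0)

/-- `𝒜_{N,p}(f) = sup_x ∫_{B(x,1)} |f(y)|^p χ_{{|y| ≥ N}}(y) dy`. -/
noncomputable def morreyA (n : ℕ) (p : ℝ) (N : ℝ) (f : EuclideanSpace ℝ (Fin n) → ℝ) : ℝ :=
  ⨆ x, ∫ y in ball x 1 ∩ {y : EuclideanSpace ℝ (Fin n) | N ≤ ‖y‖}, |f y| ^ p

/-- The vanishing property `(V*)`. -/
def VStar (n : ℕ) (p : ℝ) (f : EuclideanSpace ℝ (Fin n) → ℝ) : Prop :=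
  Tendsto (fun N : ℕ => morreyA n p (N : ℝ) f) atTop (nhds 0)

/-- Convolution `(f ∗ g)(x) = ∫ f(x - z) g(z) dz`. -/
noncomputable def conv (n : ℕ) (f g : EuclideanSpace ℝ (Fin n) → ℝ)
    (x : EuclideanSpace ℝ (Fin n)) : ℝ :=
  ∫ z, f (x - z) * g z

/-- The Morrey bound at `r = 1`, where `r ^ (-lam) = 1`, bounds all unit-ball integrals at once. -/
lemma bddAbove_unit_ball_integrals {n : ℕ} {p lam : ℝ} {f : EuclideanSpace ℝ (Fin n) → ℝ}
    (hf : MemMorrey n p lam f) (N : ℝ) :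
    BddAbove (Set.range fun x => ∫ y in ball x 1 ∩ {y : EuclideanSpace ℝ (Fin n) | N ≤ ‖y‖},
      |f y| ^ p) := by
  obtain ⟨hint, C, hC⟩ := hf
  refine ⟨C, ?_⟩
  rintro _ ⟨x, rfl⟩
  have h := hC x 1 one_pos
  simp only [morreyM, Real.one_rpow, one_mul] at h
  refine le_trans ?_ h
  exact setIntegral_mono_set (hint x 1 one_pos)
    (Eventually.of_forall fun y => Real.rpow_nonneg (abs_nonneg _) _)
    (Eventually.of_forall fun y hy => hy.1)

lemma morreyA_nonneg (n : ℕ) (p N : ℝ) (f : EuclideanSpace ℝ (Fin n) → ℝ) :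
    0 ≤ morreyA n p N f :=
  Real.iSup_nonneg fun _ => integral_nonneg fun _ => Real.rpow_nonneg (abs_nonneg _) _

/-- The covering estimate: the constant `K`, the number of unit balls needed to cover a ball of
radius `R₀`, is uniform in `N`, in the centre and in the radius. -/
lemma integral_ball_le_mul_morreyA {n : ℕ} {p lam : ℝ} {f : EuclideanSpace ℝ (Fin n) → ℝ}
    (hf : MemMorrey n p lam f) (R₀ : ℝ) :
    ∃ K : ℕ, ∀ (N : ℝ) (x : EuclideanSpace ℝ (Fin n)) (r : ℝ), r ≤ R₀ →
      ∫ y in ball x r ∩ {y : EuclideanSpace ℝ (Fin n) | N ≤ ‖y‖}, |f y| ^ p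
        ≤ K * morreyA n p N f := by
  obtain ⟨t, -, htfin, ht⟩ := finite_cover_balls_of_compact
    (isCompact_closedBall (0 : EuclideanSpace ℝ (Fin n)) R₀) one_pos
  have := htfin.fintype
  refine ⟨Fintype.card t, fun N x r hr => ?_⟩
  set E := {y : EuclideanSpace ℝ (Fin n) | N ≤ ‖y‖}
  have hsub : ball x r ∩ E ⊆ ⋃ c : t, ball (x + c) 1 ∩ E := by
    rintro y ⟨hy, hyE⟩
    have hyx : y - x ∈ closedBall (0 : EuclideanSpace ℝ (Fin n)) R₀ := by
      rw [mem_closedBall_zero_iff, ← dist_eq_norm]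
      exact (mem_ball.1 hy).le.trans hr
    obtain ⟨c, hc, hyc⟩ := Set.mem_iUnion₂.1 (ht hyx)
    refine Set.mem_iUnion.2 ⟨⟨c, hc⟩, ?_, hyE⟩
    rw [mem_ball, dist_eq_norm] at hyc ⊢
    rwa [← sub_sub]
  have hint : ∀ c : t, Integrable (fun y => |f y| ^ p)
      (volume.restrict (ball (x + (c : EuclideanSpace ℝ (Fin n))) 1 ∩ E)) := fun c =>
    (hf.1 _ 1 one_pos).mono_set Set.inter_subset_left
  -- The cover overlaps, so compare with the sum of the restricted measures.
  have hmeas : volume.restrict (ball x r ∩ E) ≤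
      ∑ c : t, volume.restrict (ball (x + (c : EuclideanSpace ℝ (Fin n))) 1 ∩ E) := by
    rw [← Measure.sum_fintype]
    exact (Measure.restrict_mono hsub le_rfl).trans Measure.restrict_iUnion_le
  calc ∫ y in ball x r ∩ E, |f y| ^ p
      ≤ ∫ y, |f y| ^ p ∂(∑ c : t,
          volume.restrict (ball (x + (c : EuclideanSpace ℝ (Fin n))) 1 ∩ E)) :=
        integral_mono_measure hmeas
          (Eventually.of_forall fun y => Real.rpow_nonneg (abs_nonneg _) _)
          (integrable_finsetSum_measure.2 fun c _ => hint c)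
    _ = ∑ c : t, ∫ y in ball (x + (c : EuclideanSpace ℝ (Fin n))) 1 ∩ E, |f y| ^ p :=
        integral_finsetSum_measure fun c _ => hint c
    _ ≤ ∑ _c : t, morreyA n p N f :=
        Finset.sum_le_sum fun c _ =>
          le_ciSup (bddAbove_unit_ball_integrals hf N) (x + (c : EuclideanSpace ℝ (Fin n)))
    _ = Fintype.card t * morreyA n p N f := by simp

theorem vstar_uniform_characterization (n : ℕ) (hn : 1 ≤ n) (p lam : ℝ)
    (hp : 1 ≤ p) (hl0 : 0 ≤ lam) (hln : lam < (n : ℝ))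
    (f : EuclideanSpace ℝ (Fin n) → ℝ) (hf : MemMorrey n p lam f) :
    VStar n p f ↔
      ∀ R₀ : ℝ, 0 < R₀ →
        Tendsto (fun N : ℕ =>
            sSup {c : ℝ | ∃ x r, 0 < r ∧ r ≤ R₀ ∧
              c = ∫ y in ball x r ∩ {y : EuclideanSpace ℝ (Fin n) | (N : ℝ) ≤ ‖y‖},
                    |f y| ^ p})
          atTop (nhds 0) := by
  constructor
  · intro hV R₀ _
    obtain ⟨K, hK⟩ := integral_ball_le_mul_morreyA hf R₀
    have hlim : Tendsto (fun N : ℕ => (K : ℝ) * morreyA n p N f) atTop (nhds 0) := by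
      simpa using hV.const_mul (K : ℝ)
    refine squeeze_zero (fun N => ?_) (fun N => ?_) hlim
    · refine Real.sSup_nonneg ?_
      rintro _ ⟨x, r, -, -, rfl⟩
      exact integral_nonneg fun _ => Real.rpow_nonneg (abs_nonneg _) _
    · refine Real.sSup_le ?_ (mul_nonneg K.cast_nonneg (morreyA_nonneg n p N f))
      rintro _ ⟨x, r, -, hr, rfl⟩
      exact hK N x r hr
  · intro h
    obtain ⟨K, hK⟩ := integral_ball_le_mul_morreyA hf 1
    refine squeeze_zero (fun N => morreyA_nonneg n p N f) (fun N => ?_) (h 1 one_pos)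
    refine ciSup_le fun x => le_csSup ⟨K * morreyA n p N f, ?_⟩ ⟨x, 1, one_pos, le_rfl, rfl⟩
    rintro _ ⟨x, r, -, hr, rfl⟩
    exact hK N x r hr
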